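/- Suppose X* is an optimal solution of min_{X∈F_{n,k}} f(X) satisfying the eigen-gap assumption with parameter δ > 0, and let G ≥ sup_{X∈F_{n,k}} ‖∇f(X)‖₂. Consider one step of the gradient orthogonal iteration: Q is an n×k matrix with orthonormal columns, Y = QQᵀ, W = Y − η∇f(Y), Q⁺ is an n×k matrix with orthonormal columns such that Q⁺R = WQ for some upper triangular k×k matrix R, and Y⁺ = Q⁺(Q⁺)ᵀ; let X⁺ = Π_{F_{n,k}}[W]. Suppose η ≤ 1/(5·max{β, G}), X⁺ ∈ P_{n,k}, and ‖X⁺ − Y‖_F ≤ 1. Define C₀ = 2(ηG/(1−ηG))² and C₁ = 2(1+ηG)C₀/(1 − 2ηβ − 2C₀(1+ηG)). Then f(Y⁺) − f(X*) ≤ (1 − ηδ/(4(1+C₁)))·(f(Y) − f(X*)). -/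

import Mathlib

/-!
Write `X⁺ = UUᵀ`, `N = 1 - UUᵀ`, `h = f(Y) - f(X*)` and `M = max β G`, so that `ηM ≤ 1/5`.

* *Quadratic growth* (`exists_growth`, `quadratic_growth`). By the eigen-gap, the projection `P`
  onto the `k` lowest eigenvectors of `∇f(X*)` satisfies `⟨∇f(X*), Z - P⟩ ≥ (δ/2)‖Z - P‖²` on the
  Fantope. First-order optimality of `X*` forces `X* = P`, so `f(Z) - f(X*) ≥ (δ/2)‖Z - X*‖²`.
* *Projected gradient step.* `X⁺` minimizes `φ(Z) = ‖Z - Y‖² + 2η⟨∇f(Y), Z - Y⟩` over the Fantope;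
  comparison with the point of the segment `[Y, X*]` at parameter `ηδ/2`, convexity and quadratic
  growth give `φ(X⁺) ≤ -η²δh/2`.
* *Orthogonal iteration.* As `X⁺` has rank `k`, it maximizes `⟨W, ·⟩` over the rank-`k` projections.
  Rotating one unit vector of its range at a time (`rotate`) shows that this range is invariant
  under `W` (`cross_zero`) and carries the top of the spectrum. Weyl-type dimension counts
  (`quad_bot`, `quad_top`) put the spectrum of `W` in `[4/5, 6/5]` there and in `[-1/5, 1/5]` on the
  complement. With `‖X⁺ - Y‖ ≤ 1`, one step of orthogonal iteration then yields
  `‖X⁺ - Y⁺‖² ≤ ‖X⁺ - Y‖²/8` (`contraction`), and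
  `φ(Y⁺) - φ(X⁺) = 2⟨W, X⁺ - Y⁺⟩ ≤ (7/5)‖X⁺ - Y⁺‖²` (`trace_loss`).
* *Conclusion.* In the descent inequality (`descent`) the unused part of the quadratic term
  `‖Y⁺ - Y‖² ≥ ‖X⁺ - Y‖²/2 - ‖X⁺ - Y⁺‖²` absorbs this loss, so `f(Y⁺) - f(Y) ≤ -ηδh/4`. This is
  stronger than the claim, because `C₁ ≥ 0`.
-/

open Matrix

noncomputable def frobNorm {m : ℕ} (A : Matrix (Fin m) (Fin m) ℝ) : ℝ :=
  Real.sqrt (∑ i, ∑ j, (A i j) ^ 2)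

/-- `eigval A j` is the `j`-th largest eigenvalue (1-indexed) of the symmetric matrix `A`. -/
noncomputable def eigval {m : ℕ} (A : Matrix (Fin m) (Fin m) ℝ) (j : ℕ) : ℝ :=
  if h : A.IsHermitian then
    if hj : m - j < m then (h.eigenvalues ∘ Tuple.sort h.eigenvalues) ⟨m - j, hj⟩ else 0
  else 0

/-- spectral norm: largest singular value. -/
noncomputable def specNorm {m : ℕ} (A : Matrix (Fin m) (Fin m) ℝ) : ℝ :=
  Real.sqrt (eigval (Aᵀ * A) 1)

/-- `P_{n,k}`: rank-`k` orthogonal projection matrices. -/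
def ProjSet (n k : ℕ) : Set (Matrix (Fin n) (Fin n) ℝ) :=
  {X | ∃ Q : Matrix (Fin n) (Fin k) ℝ, Qᵀ * Q = 1 ∧ X = Q * Qᵀ}

/-- The Fantope `F_{n,k}`. -/
def Fantope (n k : ℕ) : Set (Matrix (Fin n) (Fin n) ℝ) :=
  {X | X.IsSymm ∧ X.PosSemidef ∧ (1 - X).PosSemidef ∧ X.trace = (k : ℝ)}

namespace GOI

/-! ### Frobenius norm, quadratic forms and the spectral theorem -/

/-- Squared Frobenius norm of a rectangular matrix, as a trace. -/
noncomputable def fsq {a b : ℕ} (A : Matrix (Fin a) (Fin b) ℝ) : ℝ := (Aᵀ * A).trace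

lemma fsq_eq_sum {a b : ℕ} (A : Matrix (Fin a) (Fin b) ℝ) : fsq A = ∑ i, ∑ j, (A i j) ^ 2 := by
  simp only [fsq, trace, diag_apply, mul_apply, transpose_apply]
  rw [Finset.sum_comm]
  simp [pow_two]

lemma fsq_nonneg {a b : ℕ} (A : Matrix (Fin a) (Fin b) ℝ) : 0 ≤ fsq A := by
  rw [fsq_eq_sum]; positivity

lemma fsq_transpose {a b : ℕ} (A : Matrix (Fin a) (Fin b) ℝ) : fsq Aᵀ = fsq A := by
  simp only [fsq, transpose_transpose]
  exact trace_mul_comm _ _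

lemma frobNorm_sq {m : ℕ} (A : Matrix (Fin m) (Fin m) ℝ) : frobNorm A ^ 2 = fsq A := by
  rw [fsq_eq_sum, frobNorm, Real.sq_sqrt (by positivity)]

lemma frobNorm_nonneg {m : ℕ} (A : Matrix (Fin m) (Fin m) ℝ) : 0 ≤ frobNorm A :=
  Real.sqrt_nonneg _

lemma fsq_symm {m : ℕ} {A : Matrix (Fin m) (Fin m) ℝ} (hA : A.IsSymm) :
    fsq A = (A * A).trace := by rw [fsq, hA.eq]

lemma dot_mulVec {a b : ℕ} (A : Matrix (Fin a) (Fin b) ℝ) (x : Fin a → ℝ) (y : Fin b → ℝ) :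
    x ⬝ᵥ A *ᵥ y = (Aᵀ *ᵥ x) ⬝ᵥ y := by
  rw [dotProduct_mulVec, mulVec_transpose]

lemma dot_self_nonneg {a : ℕ} (x : Fin a → ℝ) : 0 ≤ x ⬝ᵥ x :=
  Finset.sum_nonneg fun i _ => mul_self_nonneg (x i)

lemma dot_self_pos {a : ℕ} {x : Fin a → ℝ} (hx : x ≠ 0) : 0 < x ⬝ᵥ x :=
  lt_of_le_of_ne (dot_self_nonneg x) fun h => hx (dotProduct_self_eq_zero.1 h.symm)

lemma trace_conj {a b : ℕ} (A : Matrix (Fin a) (Fin a) ℝ) (T : Matrix (Fin a) (Fin b) ℝ) :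
    (Tᵀ * A * T).trace = ∑ j, Tᵀ j ⬝ᵥ A *ᵥ Tᵀ j := by
  simp only [trace, diag_apply, Matrix.mul_assoc]
  rfl

lemma fsq_cols {a b : ℕ} (T : Matrix (Fin a) (Fin b) ℝ) : fsq T = ∑ j, Tᵀ j ⬝ᵥ Tᵀ j := rfl

lemma mul_cols {a b c : ℕ} (A : Matrix (Fin a) (Fin b) ℝ) (T : Matrix (Fin b) (Fin c) ℝ)
    (j : Fin c) : (A * T)ᵀ j = A *ᵥ Tᵀ j := rfl

/-- A symmetric matrix with `|xᵀAx| ≤ c|x|²` has operator norm at most `c`. -/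
lemma mulVec_sq_le_of_quad {a : ℕ} {A : Matrix (Fin a) (Fin a) ℝ} (hA : A.IsSymm) {c : ℝ}
    (hc : 0 < c) (h1 : ∀ x, x ⬝ᵥ A *ᵥ x ≤ c * (x ⬝ᵥ x)) (h2 : ∀ x, -(c * (x ⬝ᵥ x)) ≤ x ⬝ᵥ A *ᵥ x)
    (b : Fin a → ℝ) : (A *ᵥ b) ⬝ᵥ (A *ᵥ b) ≤ c ^ 2 * (b ⬝ᵥ b) := by
  -- polarization at `A b / c` and `b`
  have h3 := h1 (c⁻¹ • (A *ᵥ b) + b)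
  have h4 := h2 (c⁻¹ • (A *ᵥ b) - b)
  have e1 : b ⬝ᵥ A *ᵥ (A *ᵥ b) = (A *ᵥ b) ⬝ᵥ (A *ᵥ b) := by rw [dot_mulVec, hA.eq]
  have e2 : b ⬝ᵥ A *ᵥ b = (A *ᵥ b) ⬝ᵥ b := by rw [dotProduct_comm]
  simp only [mulVec_add, mulVec_sub, mulVec_smul, dotProduct_add, add_dotProduct, dotProduct_sub,
    sub_dotProduct, dotProduct_smul, smul_dotProduct, smul_eq_mul, e1, e2] at h3 h4
  set m := (A *ᵥ b) ⬝ᵥ (A *ᵥ b)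
  set s := b ⬝ᵥ b
  have h5 : 4 * (c⁻¹ * m) ≤ 2 * c * (c⁻¹ * (c⁻¹ * m)) + 2 * c * s := by linarith
  have h6 : c * (c⁻¹ * (c⁻¹ * m)) = c⁻¹ * m := by field_simp
  have h7 : c⁻¹ * m ≤ c * s := by nlinarith
  calc m = c * (c⁻¹ * m) := by field_simp
    _ ≤ c * (c * s) := by gcongr
    _ = _ := by ring

/-- The Frobenius Lipschitz bound in the trace form used for the descent inequality. -/
lemma trace_le_of_frob_le {m : ℕ} {A B : Matrix (Fin m) (Fin m) ℝ} (hA : A.IsSymm) (hB : B.IsSymm)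
    {β : ℝ} (hβ : 0 < β) (h : frobNorm A ≤ β * frobNorm B) : (A * B).trace ≤ β * fsq B := by
  have h1 : fsq A ≤ β ^ 2 * fsq B := by
    rw [← frobNorm_sq, ← frobNorm_sq, ← mul_pow]
    exact pow_le_pow_left₀ (frobNorm_nonneg _) h 2
  have h2 := fsq_nonneg (A - β • B)
  have h3 : fsq (A - β • B) = fsq A - 2 * β * (A * B).trace + β ^ 2 * fsq B := by
    rw [fsq_symm hA, fsq_symm hB, fsq_symm (hA.sub (hB.smul β))]
    simp only [Matrix.mul_sub, Matrix.sub_mul, Matrix.smul_mul, Matrix.mul_smul, trace_sub,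
      trace_smul, smul_eq_mul, trace_mul_comm B A]
    ring
  rw [h3] at h2
  have h4 : β * (A * B).trace ≤ β * (β * fsq B) := by nlinarith
  exact le_of_mul_le_mul_left h4 hβ

/-- Spectral decomposition with a real orthogonal matrix. -/
lemma spectral {m : ℕ} {A : Matrix (Fin m) (Fin m) ℝ} (hA : A.IsHermitian) :
    ∃ E : Matrix (Fin m) (Fin m) ℝ, Eᵀ * E = 1 ∧ E * Eᵀ = 1 ∧
      A = E * diagonal hA.eigenvalues * Eᵀ := by
  refine ⟨hA.eigenvectorUnitary, ?_, ?_, ?_⟩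
  · have := Unitary.coe_star_mul_self hA.eigenvectorUnitary
    simpa [star_eq_conjTranspose] using this
  · have := Unitary.coe_mul_star_self hA.eigenvectorUnitary
    simpa [star_eq_conjTranspose] using this
  · have := hA.spectral_theorem
    rw [Unitary.conjStarAlgAut_apply] at this
    simpa [star_eq_conjTranspose, Function.comp_def] using this

lemma quad_diag {m : ℕ} (E : Matrix (Fin m) (Fin m) ℝ) (d : Fin m → ℝ) (x : Fin m → ℝ) :
    x ⬝ᵥ (E * diagonal d * Eᵀ) *ᵥ x = ∑ i, d i * (Eᵀ *ᵥ x) i ^ 2 := by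
  rw [← mulVec_mulVec, ← mulVec_mulVec, dot_mulVec]
  simp only [dotProduct, mulVec_diagonal]
  exact Finset.sum_congr rfl fun i _ => by ring

lemma specNorm_mulVec_le {m : ℕ} (A : Matrix (Fin m) (Fin m) ℝ) (x : Fin m → ℝ) :
    (A *ᵥ x) ⬝ᵥ (A *ᵥ x) ≤ specNorm A ^ 2 * (x ⬝ᵥ x) := by
  rcases Nat.eq_zero_or_pos m with rfl | hm
  · simp [dotProduct]
  have hH : (Aᵀ * A).IsHermitian := by
    simpa using isHermitian_conjTranspose_mul_self A
  have hlt : m - 1 < m := by omega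
  have hP : (Aᵀ * A).PosSemidef := by
    simpa using posSemidef_conjTranspose_mul_self A
  obtain ⟨E, hE1, hE2, hE⟩ := spectral hH
  have htop : ∀ i, hH.eigenvalues i ≤ eigval (Aᵀ * A) 1 := by
    intro i
    rw [eigval, dif_pos hH, dif_pos hlt]
    have hmono := Tuple.monotone_sort hH.eigenvalues
    have := hmono (a := (Tuple.sort hH.eigenvalues).symm i) (b := ⟨m - 1, hlt⟩)
      (by rw [Fin.le_def]; have := ((Tuple.sort hH.eigenvalues).symm i).2; simp; omega)
    simpa using this
  have h0 : 0 ≤ eigval (Aᵀ * A) 1 := (hP.eigenvalues_nonneg ⟨0, hm⟩).trans (htop _)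
  rw [specNorm, Real.sq_sqrt h0]
  have e1 : (A *ᵥ x) ⬝ᵥ (A *ᵥ x) = x ⬝ᵥ (Aᵀ * A) *ᵥ x := by
    rw [← mulVec_mulVec, dot_mulVec Aᵀ, transpose_transpose]
  have e2 : x ⬝ᵥ x = ∑ i, (Eᵀ *ᵥ x) i ^ 2 := by
    have : x ⬝ᵥ x = x ⬝ᵥ (E * diagonal (fun _ => (1:ℝ)) * Eᵀ) *ᵥ x := by
      rw [diagonal_one, Matrix.mul_one, hE2, one_mulVec]
    rw [this, quad_diag]; simp
  have e3 : x ⬝ᵥ (Aᵀ * A) *ᵥ x = ∑ i, hH.eigenvalues i * (Eᵀ *ᵥ x) i ^ 2 := by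
    rw [← quad_diag, ← hE]
  rw [e1, e2, e3, Finset.mul_sum]
  exact Finset.sum_le_sum fun i _ => mul_le_mul_of_nonneg_right (htop i) (sq_nonneg _)

/-- A spectral norm bound controls the quadratic form from both sides. -/
lemma quad_le_of_specNorm {m : ℕ} {A : Matrix (Fin m) (Fin m) ℝ} {M : ℝ} (hM : 0 < M)
    (h : specNorm A ≤ M) (x : Fin m → ℝ) :
    x ⬝ᵥ A *ᵥ x ≤ M * (x ⬝ᵥ x) ∧ -(M * (x ⬝ᵥ x)) ≤ x ⬝ᵥ A *ᵥ x := by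
  have h1 := specNorm_mulVec_le A x
  have h2 : specNorm A ^ 2 ≤ M ^ 2 := pow_le_pow_left₀ (Real.sqrt_nonneg _) h 2
  have h3 := h1.trans (mul_le_mul_of_nonneg_right h2 (dot_self_nonneg x))
  have h4 := dot_self_nonneg (A *ᵥ x - M • x)
  have h5 := dot_self_nonneg (A *ᵥ x + M • x)
  simp only [dotProduct_add, add_dotProduct, dotProduct_sub,
    sub_dotProduct, dotProduct_smul, smul_dotProduct, smul_eq_mul, dotProduct_comm (A *ᵥ x) x]
    at h4 h5
  constructor
  · refine le_of_mul_le_mul_left (a := M) ?_ hM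
    nlinarith
  · refine le_of_mul_le_mul_left (a := M) ?_ hM
    nlinarith

/-! ### The Fantope and the eigen-gap -/

lemma posSemidef_transpose_mul_self {a b : ℕ} (B : Matrix (Fin a) (Fin b) ℝ) :
    (Bᵀ * B).PosSemidef := by
  simpa using posSemidef_conjTranspose_mul_self B

lemma trace_mul_nonneg {m : ℕ} {A B : Matrix (Fin m) (Fin m) ℝ} (hA : A.PosSemidef)
    (hB : B.PosSemidef) : 0 ≤ (A * B).trace := by
  obtain ⟨E, -, -, hE⟩ := spectral hA.1
  have hD := (hB.conjTranspose_mul_mul_same E)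
  have e : (A * B).trace = ∑ i, hA.1.eigenvalues i * (Eᴴ * B * E) i i := by
    conv_lhs => rw [hE]
    rw [Matrix.mul_assoc, Matrix.mul_assoc, trace_mul_comm, Matrix.mul_assoc]
    simp only [trace, diag_apply, diagonal_mul, conjTranspose_eq_transpose_of_trivial]
  rw [e]
  exact Finset.sum_nonneg fun i _ => mul_nonneg (hA.eigenvalues_nonneg i) hD.diag_nonneg

lemma fantope_fsq_le {n k : ℕ} {Z : Matrix (Fin n) (Fin n) ℝ} (hZ : Z ∈ Fantope n k) :
    fsq Z ≤ k := by
  obtain ⟨h1, h2, h3, h4⟩ := hZ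
  have := trace_mul_nonneg h2 h3
  rw [Matrix.mul_sub, Matrix.mul_one, trace_sub, h4] at this
  rw [fsq_symm h1]; linarith

lemma fantope_convex {n k : ℕ} {X Z : Matrix (Fin n) (Fin n) ℝ} (hX : X ∈ Fantope n k)
    (hZ : Z ∈ Fantope n k) {t : ℝ} (h0 : 0 ≤ t) (h1 : t ≤ 1) : X + t • (Z - X) ∈ Fantope n k := by
  have e : X + t • (Z - X) = (1 - t) • X + t • Z := by
    rw [smul_sub, sub_smul, one_smul]; abel
  have e' : 1 - (X + t • (Z - X)) = (1 - t) • (1 - X) + t • (1 - Z) := by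
    simp only [smul_sub, sub_smul, one_smul]; abel
  refine ⟨hX.1.add ((hZ.1.sub hX.1).smul t), ?_, ?_, ?_⟩
  · rw [e]; exact (hX.2.1.smul (by linarith)).add (hZ.2.1.smul h0)
  · rw [e']; exact (hX.2.2.1.smul (by linarith)).add (hZ.2.2.1.smul h0)
  · rw [trace_add, trace_smul, trace_sub, hX.2.2.2, hZ.2.2.2]; simp

lemma proj_symm {n k : ℕ} (V : Matrix (Fin n) (Fin k) ℝ) : (V * Vᵀ).IsSymm := by
  simp [Matrix.IsSymm]

lemma proj_idem {n k : ℕ} {V : Matrix (Fin n) (Fin k) ℝ} (hV : Vᵀ * V = 1) :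
    V * Vᵀ * (V * Vᵀ) = V * Vᵀ := by
  rw [Matrix.mul_assoc, ← Matrix.mul_assoc Vᵀ, hV, Matrix.one_mul]

lemma proj_trace {n k : ℕ} {V : Matrix (Fin n) (Fin k) ℝ} (hV : Vᵀ * V = 1) :
    (V * Vᵀ).trace = k := by
  rw [trace_mul_comm, hV]; simp

lemma proj_fsq {n k : ℕ} {V : Matrix (Fin n) (Fin k) ℝ} (hV : Vᵀ * V = 1) :
    fsq (V * Vᵀ) = k := by
  rw [fsq_symm (proj_symm V), proj_idem hV, proj_trace hV]

lemma proj_mem {n k : ℕ} {V : Matrix (Fin n) (Fin k) ℝ} (hV : Vᵀ * V = 1) :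
    V * Vᵀ ∈ Fantope n k := by
  refine ⟨proj_symm V, ?_, ?_, proj_trace hV⟩
  · simpa using posSemidef_transpose_mul_self Vᵀ
  · have := posSemidef_transpose_mul_self (1 - V * Vᵀ)
    have e : (1 - V * Vᵀ)ᵀ * (1 - V * Vᵀ) = 1 - V * Vᵀ := by
      rw [transpose_sub, (proj_symm V).eq, transpose_one, Matrix.mul_sub, Matrix.mul_one,
        Matrix.sub_mul, Matrix.one_mul, proj_idem hV]; abel
    rwa [e] at this

/-- Under the eigen-gap, the projection `P` onto the `k` lowest eigenvectors of `A` minimizes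
`⟨A, ·⟩` over the Fantope, with quadratic growth of modulus `δ / 2`. -/
lemma exists_growth {n k : ℕ} (hk : 0 < k) (hkn : k < n) {A : Matrix (Fin n) (Fin n) ℝ}
    (hA : A.IsSymm) {δ : ℝ} (hδ : 0 < δ)
    (hgap : δ ≤ eigval A (n - k) - eigval A (n - k + 1)) :
    ∃ P ∈ Fantope n k, ∀ Z ∈ Fantope n k, δ / 2 * fsq (Z - P) ≤ (A * (Z - P)).trace := by
  have hH : A.IsHermitian := by
    rw [IsHermitian, conjTranspose_eq_transpose_of_trivial, hA.eq]
  obtain ⟨E, hE1, hE2, hE⟩ := spectral hH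
  set l := hH.eigenvalues with hl
  set σ := Tuple.sort l with hσ
  have hmono : Monotone (l ∘ σ) := Tuple.monotone_sort l
  have hb : eigval A (n - k) = l (σ ⟨k, hkn⟩) := by
    have h : n - (n - k) = k := by omega
    rw [eigval, dif_pos hH, dif_pos (by omega)]
    simp only [h]; rfl
  have ha : eigval A (n - k + 1) = l (σ ⟨k - 1, by omega⟩) := by
    have h : n - (n - k + 1) = k - 1 := by omega
    rw [eigval, dif_pos hH, dif_pos (by omega)]
    simp only [h]; rfl
  rw [ha, hb] at hgap
  set b := l (σ ⟨k, hkn⟩)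
  set a := l (σ ⟨k - 1, by omega⟩)
  set χ : Fin n → ℝ := fun i => if (σ.symm i).1 < k then 1 else 0 with hχ
  have hχ01 : ∀ i, 0 ≤ χ i ∧ χ i ≤ 1 := by
    intro i; simp only [hχ]; split_ifs <;> norm_num
  have hχsum : ∑ i, χ i = k := by
    have h : ∑ i, χ i = ∑ j : Fin n, if j.1 < k then (1:ℝ) else 0 := by
      rw [← Equiv.sum_comp σ]; simp [hχ]
    rw [h, Fin.sum_univ_eq_sum_range (fun j => if j < k then (1:ℝ) else 0) n, Finset.sum_ite]
    have h2 : (Finset.range n).filter (fun j => j < k) = Finset.range k := by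
      ext j; simp; omega
    simp [h2]
  have hχsq : ∀ i, χ i * χ i = χ i := by
    intro i; simp only [hχ]; split_ifs <;> norm_num
  set P := E * diagonal χ * Eᵀ with hP
  have hPs : P.IsSymm := by
    simp [hP, Matrix.IsSymm, Matrix.mul_assoc]
  -- traces of the form `⟨E diag(d) Eᵀ, Z⟩`
  have htr : ∀ (d : Fin n → ℝ) (Z : Matrix (Fin n) (Fin n) ℝ),
      (E * diagonal d * Eᵀ * Z).trace = ∑ i, d i * (Eᵀ * Z * E) i i := by
    intro d Z
    rw [Matrix.mul_assoc, Matrix.mul_assoc, trace_mul_comm, Matrix.mul_assoc]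
    simp only [trace, diag_apply, diagonal_mul]
  have hEPE : Eᵀ * P * E = diagonal χ := by
    calc Eᵀ * P * E = (Eᵀ * E) * diagonal χ * (Eᵀ * E) := by simp only [hP, Matrix.mul_assoc]
      _ = _ := by rw [hE1]; simp
  have hPmem : P ∈ Fantope n k := by
    refine ⟨hPs, ?_, ?_, ?_⟩
    · simpa [hP] using (PosSemidef.diagonal (d := χ) fun i => (hχ01 i).1).mul_mul_conjTranspose_same E
    · have h := (PosSemidef.diagonal (d := fun i => 1 - χ i)
        fun i => sub_nonneg.2 (hχ01 i).2).mul_mul_conjTranspose_same E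
      have e : 1 - P = E * diagonal (fun i => 1 - χ i) * Eᴴ := by
        rw [← diagonal_sub, diagonal_one, Matrix.mul_sub, Matrix.sub_mul, Matrix.mul_one,
          conjTranspose_eq_transpose_of_trivial, hE2]
      rwa [e]
    · rw [hP, trace_mul_comm, ← Matrix.mul_assoc, hE1, Matrix.one_mul, trace_diagonal, hχsum]
  refine ⟨P, hPmem, fun Z hZ => ?_⟩
  set c : Fin n → ℝ := fun i => (Eᵀ * Z * E) i i with hc
  have hc0 : ∀ i, 0 ≤ c i := fun i => by
    simpa [hc] using (hZ.2.1.conjTranspose_mul_mul_same E).diag_nonneg (i := i)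
  have hc1 : ∀ i, c i ≤ 1 := fun i => by
    have h := (hZ.2.2.1.conjTranspose_mul_mul_same E).diag_nonneg (i := i)
    rw [conjTranspose_eq_transpose_of_trivial, Matrix.mul_sub, Matrix.sub_mul, Matrix.mul_one,
      hE1] at h
    simpa using h
  have hcsum : ∑ i, c i = k := by
    rw [← hZ.2.2.2]
    have : (Eᵀ * Z * E).trace = Z.trace := by
      rw [trace_mul_comm, ← Matrix.mul_assoc, hE2, Matrix.one_mul]
    rw [← this]; rfl
  have e1 : (A * (Z - P)).trace = ∑ i, l i * (c i - χ i) := by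
    rw [Matrix.mul_sub, trace_sub, hE, htr, htr, hEPE, ← Finset.sum_sub_distrib]
    simp only [diagonal_apply_eq, hc, mul_sub]
  have e2 : fsq (Z - P) ≤ 2 * (k - ∑ i, χ i * c i) := by
    have hPP : fsq P ≤ k := fantope_fsq_le hPmem
    have hZZ := fantope_fsq_le hZ
    have hPZ : (P * Z).trace = ∑ i, χ i * c i := by rw [hP, htr]
    rw [fsq_symm hPs] at hPP
    rw [fsq_symm hZ.1] at hZZ
    rw [fsq_symm (hZ.1.sub hPs), Matrix.mul_sub, Matrix.sub_mul, Matrix.sub_mul, trace_sub,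
      trace_sub, trace_sub, trace_mul_comm Z P, hPZ]
    linarith
  have hterm : ∀ i, b * (c i - χ i) + (b - a) * (χ i - χ i * c i) ≤ l i * (c i - χ i) := by
    intro i
    by_cases h : (σ.symm i).1 < k
    · have h1 : χ i = 1 := by simp [hχ, h]
      have h2 : l i ≤ a := by
        have := hmono (a := σ.symm i) (b := ⟨k - 1, by omega⟩) (by rw [Fin.le_def]; simp; omega)
        simpa using this
      rw [h1]; nlinarith [hc1 i]
    · have h1 : χ i = 0 := by simp [hχ, h]
      have h2 : b ≤ l i := by
        have := hmono (a := ⟨k, hkn⟩) (b := σ.symm i) (by rw [Fin.le_def]; simp; omega)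
        simpa using this
      rw [h1]; nlinarith [hc0 i]
  have hS : (b - a) * (k - ∑ i, χ i * c i) ≤ (A * (Z - P)).trace := by
    rw [e1]
    refine le_trans (le_of_eq ?_) (Finset.sum_le_sum fun i _ => hterm i)
    rw [Finset.sum_add_distrib, ← Finset.mul_sum, ← Finset.mul_sum, Finset.sum_sub_distrib,
      Finset.sum_sub_distrib, hcsum, hχsum]
    ring
  have := fsq_nonneg (Z - P)
  nlinarith

lemma gap_le {n k : ℕ} (hk : 0 < k) (hkn : k < n) {A : Matrix (Fin n) (Fin n) ℝ}
    (hA : A.IsSymm) {δ M : ℝ} (hgap : δ ≤ eigval A (n - k) - eigval A (n - k + 1))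
    (h1 : ∀ x, x ⬝ᵥ A *ᵥ x ≤ M * (x ⬝ᵥ x)) (h2 : ∀ x, -(M * (x ⬝ᵥ x)) ≤ x ⬝ᵥ A *ᵥ x) :
    δ ≤ 2 * M := by
  have hH : A.IsHermitian := by
    rw [IsHermitian, conjTranspose_eq_transpose_of_trivial, hA.eq]
  obtain ⟨E, hE1, hE2, hE⟩ := spectral hH
  have hev : ∀ i, -M ≤ hH.eigenvalues i ∧ hH.eigenvalues i ≤ M := by
    intro i
    have hn : Eᵀ i ⬝ᵥ Eᵀ i = 1 := by
      have : (Eᵀ * E) i i = 1 := by rw [hE1]; simp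
      exact this
    have hq : Eᵀ i ⬝ᵥ A *ᵥ Eᵀ i = hH.eigenvalues i := by
      have h : (Eᵀ * A * E) i i = hH.eigenvalues i := by
        have : Eᵀ * A * E = (Eᵀ * E) * diagonal hH.eigenvalues * (Eᵀ * E) := by
          conv_lhs => rw [hE]
          simp only [Matrix.mul_assoc]
        rw [this, hE1]; simp
      rw [← h, Matrix.mul_assoc]; rfl
    have h3 := h1 (Eᵀ i)
    have h4 := h2 (Eᵀ i)
    rw [hn, hq] at h3 h4
    constructor <;> linarith
  rw [eigval, eigval, dif_pos hH, dif_pos hH, dif_pos (by omega), dif_pos (by omega)] at hgap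
  have := (hev (Tuple.sort hH.eigenvalues ⟨n - (n - k), by omega⟩)).2
  have := (hev (Tuple.sort hH.eigenvalues ⟨n - (n - k + 1), by omega⟩)).1
  simp only [Function.comp_apply] at hgap
  linarith

/-! ### Optimal frames -/

section Rotation

variable {n k : ℕ} {U : Matrix (Fin n) (Fin k) ℝ} {W : Matrix (Fin n) (Fin n) ℝ}

/-- Replacing the unit vector `U a` of the range of `U` by a unit vector `w` whose component in
that range is a multiple of `U a` gives another orthonormal frame, hence cannot increase
`tr(UᵀWU)` when `U` is optimal. -/
lemma rotate_unit (hU : Uᵀ * U = 1) (hW : W.IsSymm)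
    (hopt : ∀ V : Matrix (Fin n) (Fin k) ℝ, Vᵀ * V = 1 →
      (W * (V * Vᵀ)).trace ≤ (W * (U * Uᵀ)).trace)
    {a : Fin k → ℝ} {w : Fin n → ℝ} {τ : ℝ} (ha : a ⬝ᵥ a = 1) (hw : w ⬝ᵥ w = 1)
    (h : Uᵀ *ᵥ w = τ • a) : w ⬝ᵥ W *ᵥ w ≤ (U *ᵥ a) ⬝ᵥ W *ᵥ (U *ᵥ a) := by
  set x := w - U *ᵥ a with hx
  have hUx : Uᵀ *ᵥ x = (τ - 1) • a := by
    rw [hx, mulVec_sub, h, mulVec_mulVec, hU, one_mulVec, sub_smul, one_smul]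
  have hwu : (U *ᵥ a) ⬝ᵥ w = τ := by
    rw [dotProduct_comm, dot_mulVec, h, smul_dotProduct, ha]; simp
  have huu : (U *ᵥ a) ⬝ᵥ (U *ᵥ a) = 1 := by
    rw [dot_mulVec, mulVec_mulVec, hU, one_mulVec, ha]
  have hxx : x ⬝ᵥ x = 2 - 2 * τ := by
    rw [hx, dotProduct_sub, sub_dotProduct, sub_dotProduct, hw, huu, dotProduct_comm w, hwu]; ring
  have hxU : x ᵥ* U = (τ - 1) • a := by rw [← hUx, mulVec_transpose]
  have hV : (U + vecMulVec x a)ᵀ * (U + vecMulVec x a) = 1 := by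
    rw [transpose_add, transpose_vecMulVec, Matrix.add_mul, Matrix.mul_add, Matrix.mul_add, hU,
      mul_vecMulVec, hUx, vecMulVec_mul, hxU, vecMulVec_mul_vecMulVec, hxx]
    ext i j
    simp [vecMulVec_apply]
    ring
  have key := hopt _ hV
  have e : (U + vecMulVec x a) * (U + vecMulVec x a)ᵀ
      = U * Uᵀ + vecMulVec (U *ᵥ a) x + vecMulVec x (U *ᵥ a) + vecMulVec x x := by
    rw [transpose_add, transpose_vecMulVec, Matrix.add_mul, Matrix.mul_add, Matrix.mul_add,
      mul_vecMulVec, vecMulVec_mul, vecMul_transpose, vecMulVec_mul_vecMulVec, ha]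
    simp only [one_smul]
    abel
  rw [e] at key
  simp only [Matrix.mul_add, trace_add, mul_vecMulVec, trace_vecMulVec] at key
  have hsw : ∀ y z : Fin n → ℝ, (W *ᵥ y) ⬝ᵥ z = z ⬝ᵥ W *ᵥ y := fun y z => dotProduct_comm _ _
  have hsw2 : w ⬝ᵥ W *ᵥ (U *ᵥ a) = (U *ᵥ a) ⬝ᵥ W *ᵥ w := by
    rw [dot_mulVec, hW.eq, dotProduct_comm]
  simp only [hsw, hx, mulVec_sub, dotProduct_sub, sub_dotProduct, hsw2] at key
  linarith

/-- Homogeneous form of `rotate_unit`. -/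
lemma rotate (hU : Uᵀ * U = 1) (hW : W.IsSymm)
    (hopt : ∀ V : Matrix (Fin n) (Fin k) ℝ, Vᵀ * V = 1 →
      (W * (V * Vᵀ)).trace ≤ (W * (U * Uᵀ)).trace)
    (a : Fin k → ℝ) (w : Fin n → ℝ) (τ : ℝ) (h : Uᵀ *ᵥ w = τ • a) :
    (a ⬝ᵥ a) * (w ⬝ᵥ W *ᵥ w) ≤ (w ⬝ᵥ w) * ((U *ᵥ a) ⬝ᵥ W *ᵥ (U *ᵥ a)) := by
  by_cases ha : a = 0
  · simp [ha]
  by_cases hw : w = 0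
  · simp [hw]
  have pa := dot_self_pos ha
  have pw := dot_self_pos hw
  set p := Real.sqrt (a ⬝ᵥ a) with hp
  set q := Real.sqrt (w ⬝ᵥ w) with hq
  have hp0 : 0 < p := Real.sqrt_pos.2 pa
  have hq0 : 0 < q := Real.sqrt_pos.2 pw
  have hpp : a ⬝ᵥ a = p ^ 2 := (Real.sq_sqrt pa.le).symm
  have hqq : w ⬝ᵥ w = q ^ 2 := (Real.sq_sqrt pw.le).symm
  have key := rotate_unit hU hW hopt (a := p⁻¹ • a) (w := q⁻¹ • w) (τ := q⁻¹ * τ * p)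
    (by rw [smul_dotProduct, dotProduct_smul, hpp, smul_eq_mul, smul_eq_mul]; field_simp)
    (by rw [smul_dotProduct, dotProduct_smul, hqq, smul_eq_mul, smul_eq_mul]; field_simp)
    (by rw [mulVec_smul, h, smul_smul, smul_smul]; congr 1; field_simp)
  simp only [mulVec_smul, smul_dotProduct, dotProduct_smul, smul_eq_mul] at key
  rw [hpp, hqq]
  set s := w ⬝ᵥ W *ᵥ w
  set r := (U *ᵥ a) ⬝ᵥ W *ᵥ (U *ᵥ a)
  have : p ^ 2 * q ^ 2 * (q⁻¹ * (q⁻¹ * s)) ≤ p ^ 2 * q ^ 2 * (p⁻¹ * (p⁻¹ * r)) := by gcongr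
  have e1 : p ^ 2 * q ^ 2 * (q⁻¹ * (q⁻¹ * s)) = p ^ 2 * s := by field_simp
  have e2 : p ^ 2 * q ^ 2 * (p⁻¹ * (p⁻¹ * r)) = q ^ 2 * r := by field_simp
  linarith

/-- An optimal frame spans an invariant subspace of `W`. -/
lemma cross_zero (hU : Uᵀ * U = 1) (hW : W.IsSymm)
    (hopt : ∀ V : Matrix (Fin n) (Fin k) ℝ, Vᵀ * V = 1 →
      (W * (V * Vᵀ)).trace ≤ (W * (U * Uᵀ)).trace)
    (a : Fin k → ℝ) (v : Fin n → ℝ) (hv : Uᵀ *ᵥ v = 0) : (U *ᵥ a) ⬝ᵥ W *ᵥ v = 0 := by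
  by_cases ha : a = 0
  · simp [ha]
  have pa := dot_self_pos ha
  have huu : (U *ᵥ a) ⬝ᵥ (U *ᵥ a) = a ⬝ᵥ a := by
    rw [dot_mulVec, mulVec_mulVec, hU, one_mulVec]
  have huv : (U *ᵥ a) ⬝ᵥ v = 0 := by
    rw [dotProduct_comm, dot_mulVec, hv, zero_dotProduct]
  have hsw : v ⬝ᵥ W *ᵥ (U *ᵥ a) = (U *ᵥ a) ⬝ᵥ W *ᵥ v := by
    rw [dot_mulVec, hW.eq, dotProduct_comm]
  set A := a ⬝ᵥ a
  set B := v ⬝ᵥ v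
  set r := (U *ᵥ a) ⬝ᵥ W *ᵥ (U *ᵥ a)
  set s := v ⬝ᵥ W *ᵥ v
  set x := (U *ᵥ a) ⬝ᵥ W *ᵥ v
  have key : ∀ t : ℝ, 2 * t * (A * x) ≤ t ^ 2 * (B * r - A * s) := by
    intro t
    have h := rotate hU hW hopt a (U *ᵥ a + t • v) 1
      (by rw [mulVec_add, mulVec_smul, hv, mulVec_mulVec, hU]; simp)
    simp only [mulVec_add, mulVec_smul, dotProduct_add, add_dotProduct, dotProduct_smul,
      smul_dotProduct, smul_eq_mul, huu, huv, dotProduct_comm v (U *ᵥ a), hsw] at h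
    change A * (r + t * x + t * (x + t * s)) ≤ (A + t * 0 + t * (0 + t * B)) * r at h
    linarith
  set D := B * r - A * s
  set y := A * x with hy
  -- `2ty ≤ t²D` for all `t`, evaluated at `t = y / (|D| + 1)`
  have hD : 0 < |D| + 1 := by positivity
  have h := key (y / (|D| + 1))
  have h2 : 2 * y ^ 2 * (|D| + 1) ≤ y ^ 2 * D := by
    have h3 := mul_le_mul_of_nonneg_right h (sq_nonneg (|D| + 1))
    have e1 : 2 * (y / (|D| + 1)) * y * (|D| + 1) ^ 2 = 2 * y ^ 2 * (|D| + 1) := by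
      field_simp
    have e2 : (y / (|D| + 1)) ^ 2 * D * (|D| + 1) ^ 2 = y ^ 2 * D := by field_simp
    rwa [e1, e2] at h3
  have h3 : y ^ 2 ≤ 0 := by
    have h5 := mul_le_mul_of_nonneg_left (le_abs_self D) (sq_nonneg y)
    have h6 := mul_nonneg (sq_nonneg y) (abs_nonneg D)
    linarith
  have h4 : y = 0 := by
    exact (pow_eq_zero_iff two_ne_zero).1 (le_antisymm h3 (sq_nonneg y))
  exact (mul_eq_zero.1 h4).resolve_left pa.ne'

end Rotation

/-! ### One step of orthogonal iteration -/

lemma exists_kernel {k : ℕ} (M : Matrix (Fin k) (Fin k) ℝ) (z : Fin k → ℝ) :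
    ∃ (b : Fin k → ℝ) (c : ℝ), (b ≠ 0 ∨ c ≠ 0) ∧ M *ᵥ b + c • z = 0 := by
  by_cases hM : M.det = 0
  · obtain ⟨b, hb, h⟩ := exists_mulVec_eq_zero_iff.2 hM
    exact ⟨b, 0, Or.inl hb, by simp [h]⟩
  · refine ⟨M⁻¹ *ᵥ (-z), 1, Or.inr one_ne_zero, ?_⟩
    rw [mulVec_mulVec, mul_nonsing_inv _ (isUnit_iff_ne_zero.2 hM)]
    simp

lemma frame_dot {n k : ℕ} {U : Matrix (Fin n) (Fin k) ℝ} (hU : Uᵀ * U = 1) (a b : Fin k → ℝ) :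
    (U *ᵥ a) ⬝ᵥ (U *ᵥ b) = a ⬝ᵥ b := by
  rw [dot_mulVec, mulVec_mulVec, hU, one_mulVec]

lemma compl_symm {n k : ℕ} (U : Matrix (Fin n) (Fin k) ℝ) : (1 - U * Uᵀ).IsSymm :=
  isSymm_one.sub (proj_symm U)

lemma compl_idem {n k : ℕ} {U : Matrix (Fin n) (Fin k) ℝ} (hU : Uᵀ * U = 1) :
    (1 - U * Uᵀ) * (1 - U * Uᵀ) = 1 - U * Uᵀ := by
  rw [Matrix.mul_sub, Matrix.mul_one, Matrix.sub_mul, Matrix.one_mul, proj_idem hU]; abel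

lemma transpose_mul_compl {n k : ℕ} {U : Matrix (Fin n) (Fin k) ℝ} (hU : Uᵀ * U = 1) :
    Uᵀ * (1 - U * Uᵀ) = 0 := by
  rw [Matrix.mul_sub, ← Matrix.mul_assoc, hU]; simp

lemma compl_dot {n k : ℕ} {U : Matrix (Fin n) (Fin k) ℝ} (hU : Uᵀ * U = 1) (x : Fin n → ℝ) :
    ((1 - U * Uᵀ) *ᵥ x) ⬝ᵥ ((1 - U * Uᵀ) *ᵥ x) = x ⬝ᵥ x - (Uᵀ *ᵥ x) ⬝ᵥ (Uᵀ *ᵥ x) := by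
  rw [dot_mulVec, mulVec_mulVec, (compl_symm U).eq, compl_idem hU, sub_mulVec, sub_dotProduct,
    one_mulVec, ← mulVec_mulVec, dotProduct_comm (U *ᵥ _), dot_mulVec]

lemma frame_transpose_le {n k : ℕ} {U : Matrix (Fin n) (Fin k) ℝ} (hU : Uᵀ * U = 1)
    (x : Fin n → ℝ) : (Uᵀ *ᵥ x) ⬝ᵥ (Uᵀ *ᵥ x) ≤ x ⬝ᵥ x := by
  have := dot_self_nonneg ((1 - U * Uᵀ) *ᵥ x)
  rw [compl_dot hU] at this
  linarith

lemma fsq_compl {n k : ℕ} {U V : Matrix (Fin n) (Fin k) ℝ} (hU : Uᵀ * U = 1) (hV : Vᵀ * V = 1) :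
    fsq ((1 - U * Uᵀ) * V) = k - (U * Uᵀ * (V * Vᵀ)).trace := by
  rw [fsq, transpose_mul, (compl_symm U).eq, Matrix.mul_assoc, ← Matrix.mul_assoc (1 - U * Uᵀ),
    compl_idem hU, trace_mul_comm, Matrix.mul_assoc, Matrix.sub_mul, Matrix.one_mul, trace_sub,
    proj_trace hV]

lemma fsq_proj_sub {n k : ℕ} {U V : Matrix (Fin n) (Fin k) ℝ} (hU : Uᵀ * U = 1)
    (hV : Vᵀ * V = 1) : fsq (U * Uᵀ - V * Vᵀ) = 2 * fsq ((1 - U * Uᵀ) * V) := by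
  rw [fsq_compl hU hV, fsq_symm ((proj_symm U).sub (proj_symm V)), Matrix.mul_sub, Matrix.sub_mul,
    Matrix.sub_mul, proj_idem hU, proj_idem hV, trace_sub, trace_sub, trace_sub, proj_trace hU,
    proj_trace hV, trace_mul_comm (V * Vᵀ)]
  ring

lemma mulVec_le_fsq {a b : ℕ} (T : Matrix (Fin a) (Fin b) ℝ) (y : Fin b → ℝ) :
    (T *ᵥ y) ⬝ᵥ (T *ᵥ y) ≤ fsq T * (y ⬝ᵥ y) := by
  rw [fsq_eq_sum, Finset.sum_mul]
  refine Finset.sum_le_sum fun i _ => ?_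
  have := Finset.sum_mul_sq_le_sq_mul_sq Finset.univ (T i) y
  simp only [dotProduct, mulVec, ← pow_two]
  exact this

/-- If `|R y|² ≥ c⁻¹|y|²` and `P = R⁻¹`, then the transpose `Pᵀ` has squared operator norm at
most `c`. -/
lemma inv_transpose_bound {k : ℕ} {R P : Matrix (Fin k) (Fin k) ℝ} (hRP : R * P = 1) {c : ℝ}
    (hc : 0 < c) (hR : ∀ y, y ⬝ᵥ y ≤ c * ((R *ᵥ y) ⬝ᵥ (R *ᵥ y))) (y : Fin k → ℝ) :
    (Pᵀ *ᵥ y) ⬝ᵥ (Pᵀ *ᵥ y) ≤ c * (y ⬝ᵥ y) := by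
  set z := Pᵀ *ᵥ y with hz
  have h1 : (P *ᵥ z) ⬝ᵥ (P *ᵥ z) ≤ c * (z ⬝ᵥ z) := by
    have := hR (P *ᵥ z)
    rwa [mulVec_mulVec z R P, hRP, one_mulVec] at this
  have h2 : y ⬝ᵥ (P *ᵥ z) = z ⬝ᵥ z := by rw [dot_mulVec]
  have h3 := dot_self_nonneg (c • y - P *ᵥ z)
  simp only [dotProduct_sub, sub_dotProduct, dotProduct_smul, smul_dotProduct, smul_eq_mul,
    dotProduct_comm (P *ᵥ z) y, h2] at h3
  have h4 : c * (z ⬝ᵥ z) ≤ c * (c * (y ⬝ᵥ y)) := by linarith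
  exact le_of_mul_le_mul_left h4 hc

section OrthIter

variable {n k : ℕ} {U Q : Matrix (Fin n) (Fin k) ℝ} {W : Matrix (Fin n) (Fin n) ℝ}

/-- Weyl-type bound: below the optimal `k`-dimensional subspace, `W` differs from the rank-`k`
matrix `QQᵀ` by at most the size of the perturbation. -/
lemma quad_bot (hU : Uᵀ * U = 1) (hW : W.IsSymm)
    (hopt : ∀ V : Matrix (Fin n) (Fin k) ℝ, Vᵀ * V = 1 →
      (W * (V * Vᵀ)).trace ≤ (W * (U * Uᵀ)).trace)
    (hup : ∀ x, x ⬝ᵥ W *ᵥ x ≤ (Qᵀ *ᵥ x) ⬝ᵥ (Qᵀ *ᵥ x) + 1 / 5 * (x ⬝ᵥ x))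
    {v : Fin n → ℝ} (hv : Uᵀ *ᵥ v = 0) : v ⬝ᵥ W *ᵥ v ≤ 1 / 5 * (v ⬝ᵥ v) := by
  by_cases hv0 : v = 0
  · simp [hv0]
  have pv := dot_self_pos hv0
  -- a vector of `range U + span v` (dimension `k + 1`) annihilated by `Qᵀ` (rank `k`)
  obtain ⟨b, c, hbc, h⟩ := exists_kernel (Qᵀ * U) (Qᵀ *ᵥ v)
  have hQw : Qᵀ *ᵥ (U *ᵥ b + c • v) = 0 := by
    rw [mulVec_add, mulVec_smul, mulVec_mulVec, h]
  have h1 := hup (U *ᵥ b + c • v)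
  have huv : (U *ᵥ b) ⬝ᵥ v = 0 := by rw [dotProduct_comm, dot_mulVec, hv, zero_dotProduct]
  have hsw : v ⬝ᵥ W *ᵥ (U *ᵥ b) = (U *ᵥ b) ⬝ᵥ W *ᵥ v := by
    rw [dot_mulVec, hW.eq, dotProduct_comm]
  rw [hQw] at h1
  simp only [mulVec_add, mulVec_smul, dotProduct_add, add_dotProduct, dotProduct_smul,
    smul_dotProduct, smul_eq_mul, frame_dot hU, huv, dotProduct_comm v (U *ᵥ b), hsw,
    cross_zero hU hW hopt b v hv, dotProduct_zero] at h1
  have h2 := rotate hU hW hopt b v 0 (by rw [hv, zero_smul])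
  set r := (U *ᵥ b) ⬝ᵥ W *ᵥ (U *ᵥ b)
  set s := v ⬝ᵥ W *ᵥ v
  set B := v ⬝ᵥ v
  set A := b ⬝ᵥ b
  have hA : 0 ≤ A := dot_self_nonneg b
  have hpos : 0 < A + c ^ 2 * B := by
    rcases hbc with hb | hc
    · have := dot_self_pos hb
      positivity
    · positivity
  have h3 : r + c ^ 2 * s ≤ 1 / 5 * (A + c ^ 2 * B) := by linarith
  have h4 : (A + c ^ 2 * B) * s ≤ (A + c ^ 2 * B) * (1 / 5 * B) := by
    have := mul_le_mul_of_nonneg_left h3 pv.le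
    linarith
  exact le_of_mul_le_mul_left h4 hpos

/-- Weyl-type bound on the optimal `k`-dimensional subspace. -/
lemma quad_top (hU : Uᵀ * U = 1) (hQ : Qᵀ * Q = 1) (hW : W.IsSymm)
    (hopt : ∀ V : Matrix (Fin n) (Fin k) ℝ, Vᵀ * V = 1 →
      (W * (V * Vᵀ)).trace ≤ (W * (U * Uᵀ)).trace)
    (hlo : ∀ x, (Qᵀ *ᵥ x) ⬝ᵥ (Qᵀ *ᵥ x) - 1 / 5 * (x ⬝ᵥ x) ≤ x ⬝ᵥ W *ᵥ x)
    (a : Fin k → ℝ) : 4 / 5 * (a ⬝ᵥ a) ≤ (U *ᵥ a) ⬝ᵥ W *ᵥ (U *ᵥ a) := by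
  by_cases ha : a = 0
  · simp [ha]
  -- a vector of `range Q` whose component in `range U` is a multiple of `U a`
  obtain ⟨b, c, hbc, h⟩ := exists_kernel (Uᵀ * Q) (-a)
  have hb : b ≠ 0 := by
    rintro rfl
    simp [ha] at h hbc
    exact hbc h
  have pb := dot_self_pos hb
  have h1 := hlo (Q *ᵥ b)
  rw [mulVec_mulVec, hQ, one_mulVec, frame_dot hQ] at h1
  have h2 := rotate hU hW hopt a (Q *ᵥ b) c (by
    rw [mulVec_mulVec]
    rw [smul_neg] at h
    exact add_neg_eq_zero.1 h)
  rw [frame_dot hQ] at h2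
  have h3 := mul_le_mul_of_nonneg_left h1 (dot_self_nonneg a)
  refine le_of_mul_le_mul_left ?_ pb
  linarith

/-- `UᵀW` vanishes on the orthogonal complement of `range U`. -/
lemma cross_matrix (hU : Uᵀ * U = 1) (hW : W.IsSymm)
    (hopt : ∀ V : Matrix (Fin n) (Fin k) ℝ, Vᵀ * V = 1 →
      (W * (V * Vᵀ)).trace ≤ (W * (U * Uᵀ)).trace) : Uᵀ * W * (1 - U * Uᵀ) = 0 := by
  ext i j
  have h := cross_zero hU hW hopt (Pi.single i 1) ((1 - U * Uᵀ) *ᵥ Pi.single j 1)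
    (by rw [mulVec_mulVec, transpose_mul_compl hU, zero_mulVec])
  rw [mulVec_single_one, mulVec_single_one] at h
  rw [Matrix.mul_assoc]
  exact h

/-- One step of orthogonal iteration contracts the squared distance to the dominant subspace
by a factor `1/8`. -/
lemma contraction (hU : Uᵀ * U = 1) (hQ : Qᵀ * Q = 1) (hW : W.IsSymm)
    (hopt : ∀ V : Matrix (Fin n) (Fin k) ℝ, Vᵀ * V = 1 →
      (W * (V * Vᵀ)).trace ≤ (W * (U * Uᵀ)).trace)
    (hup : ∀ x, x ⬝ᵥ W *ᵥ x ≤ (Qᵀ *ᵥ x) ⬝ᵥ (Qᵀ *ᵥ x) + 1 / 5 * (x ⬝ᵥ x))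
    (hlo : ∀ x, (Qᵀ *ᵥ x) ⬝ᵥ (Qᵀ *ᵥ x) - 1 / 5 * (x ⬝ᵥ x) ≤ x ⬝ᵥ W *ᵥ x)
    (hT : fsq ((1 - U * Uᵀ) * Q) ≤ 1 / 2)
    {Qp : Matrix (Fin n) (Fin k) ℝ} (hQp : Qpᵀ * Qp = 1) {R : Matrix (Fin k) (Fin k) ℝ}
    (hQR : Qp * R = W * Q) :
    fsq ((1 - U * Uᵀ) * Qp) ≤ 1 / 8 * fsq ((1 - U * Uᵀ) * Q) := by
  have hcross := cross_matrix hU hW hopt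
  have hbot := fun {v} => quad_bot (v := v) hU hW hopt hup
  have htop := quad_top hU hQ hW hopt hlo
  have hdot := compl_dot hU
  have hUN := transpose_mul_compl hU
  have hNs := compl_symm U
  have hNN := compl_idem hU
  have hX : U * Uᵀ + (1 - U * Uᵀ) = 1 := by abel
  set N := 1 - U * Uᵀ with hN
  set T := N * Q with hTdef
  have hNW : N * W = N * W * N := by
    have h1 : N * W * U = 0 := by
      have := congrArg transpose hcross
      simpa [transpose_mul, hW.eq, hNs.eq, Matrix.mul_assoc] using this
    calc N * W = N * W * (U * Uᵀ + N) := by rw [hX, Matrix.mul_one]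
      _ = N * W * U * Uᵀ + N * W * N := by rw [Matrix.mul_add, Matrix.mul_assoc (N * W)]
      _ = _ := by rw [h1, Matrix.zero_mul, zero_add]
  have hBs : (N * W * N).IsSymm := by
    simp [Matrix.IsSymm, transpose_mul, hW.eq, hNs.eq, Matrix.mul_assoc]
  have hBq : ∀ x, x ⬝ᵥ (N * W * N) *ᵥ x = (N *ᵥ x) ⬝ᵥ W *ᵥ (N *ᵥ x) := by
    intro x
    rw [← mulVec_mulVec, ← mulVec_mulVec, dot_mulVec, hNs.eq]
  have hNle : ∀ x, (N *ᵥ x) ⬝ᵥ (N *ᵥ x) ≤ x ⬝ᵥ x := by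
    intro x
    rw [hdot]
    linarith [dot_self_nonneg (Uᵀ *ᵥ x)]
  have hB : ∀ x, ((N * W * N) *ᵥ x) ⬝ᵥ ((N * W * N) *ᵥ x) ≤ (1 / 5) ^ 2 * (x ⬝ᵥ x) := by
    refine mulVec_sq_le_of_quad hBs (by norm_num) (fun x => ?_) (fun x => ?_)
    · rw [hBq]
      have := hbot (v := N *ᵥ x) (by rw [mulVec_mulVec, hUN, zero_mulVec])
      linarith [hNle x]
    · rw [hBq]
      have := hlo (N *ᵥ x)
      linarith [hNle x, dot_self_nonneg (Qᵀ *ᵥ (N *ᵥ x))]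
  have hVR : N * Qp * R = N * W * N * T := by
    rw [Matrix.mul_assoc, hQR, ← Matrix.mul_assoc, hTdef, ← Matrix.mul_assoc (N * W * N),
      Matrix.mul_assoc (N * W) N N, hNN, ← hNW]
  have hR : ∀ y, y ⬝ᵥ y ≤ 25 / 8 * ((R *ᵥ y) ⬝ᵥ (R *ᵥ y)) := by
    intro y
    have h1 : (R *ᵥ y) ⬝ᵥ (R *ᵥ y) = (W *ᵥ (Q *ᵥ y)) ⬝ᵥ (W *ᵥ (Q *ᵥ y)) := by
      rw [← frame_dot hQp, mulVec_mulVec, hQR, mulVec_mulVec]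
    have h2 := frame_transpose_le hU (W *ᵥ (Q *ᵥ y))
    set s := Uᵀ *ᵥ (Q *ᵥ y) with hs
    have h3 : Uᵀ *ᵥ (W *ᵥ (Q *ᵥ y)) = Uᵀ *ᵥ (W *ᵥ (U *ᵥ s)) := by
      have : Uᵀ * W = Uᵀ * W * (U * Uᵀ) := by
        calc Uᵀ * W = Uᵀ * W * (U * Uᵀ + N) := by rw [hX, Matrix.mul_one]
          _ = _ := by rw [Matrix.mul_add, hcross, add_zero]
      rw [mulVec_mulVec, this, hs]
      simp only [mulVec_mulVec, Matrix.mul_assoc]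
    have h4 := htop s
    rw [h3] at h2
    set K := Uᵀ *ᵥ (W *ᵥ (U *ᵥ s)) with hK
    have h5 : (U *ᵥ s) ⬝ᵥ W *ᵥ (U *ᵥ s) = K ⬝ᵥ s := by
      rw [dotProduct_comm, dot_mulVec]
    have h6 := dot_self_nonneg (K - (4 / 5 : ℝ) • s)
    simp only [dotProduct_sub, sub_dotProduct, dotProduct_smul, smul_dotProduct, smul_eq_mul,
      dotProduct_comm s K] at h6
    have h7 := hdot (Q *ᵥ y)
    rw [frame_dot hQ, mulVec_mulVec] at h7
    have h8 := (mulVec_le_fsq T y).trans (mul_le_mul_of_nonneg_right hT (dot_self_nonneg y))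
    linarith
  have hdet : R.det ≠ 0 := by
    intro h0
    obtain ⟨y, hy, h⟩ := exists_mulVec_eq_zero_iff.2 h0
    have h1 := hR y
    have h2 := dot_self_pos hy
    rw [h, dotProduct_zero] at h1
    linarith
  have hRP := mul_nonsing_inv R (isUnit_iff_ne_zero.2 hdet)
  set P := R⁻¹
  have hV : N * Qp = N * W * N * (T * P) := by
    rw [← Matrix.mul_assoc, ← hVR, Matrix.mul_assoc, hRP, Matrix.mul_one]
  have h1 : fsq (N * Qp) ≤ (1 / 5) ^ 2 * fsq (T * P) := by
    rw [hV, fsq_cols, fsq_cols, Finset.mul_sum]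
    exact Finset.sum_le_sum fun j _ => hB _
  have h2 : fsq (T * P) ≤ 25 / 8 * fsq T := by
    rw [← fsq_transpose, ← fsq_transpose T, transpose_mul, fsq_cols, fsq_cols, Finset.mul_sum]
    exact Finset.sum_le_sum fun j _ => inv_transpose_bound hRP (by norm_num) hR _
  linarith

/-- The loss in `⟨W, ·⟩` from replacing the optimal projection by another one is of second order
in their distance. -/
lemma trace_loss (hU : Uᵀ * U = 1) (hQ : Qᵀ * Q = 1) (hW : W.IsSymm)
    (hopt : ∀ V : Matrix (Fin n) (Fin k) ℝ, Vᵀ * V = 1 →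
      (W * (V * Vᵀ)).trace ≤ (W * (U * Uᵀ)).trace)
    (hup : ∀ x, x ⬝ᵥ W *ᵥ x ≤ (Qᵀ *ᵥ x) ⬝ᵥ (Qᵀ *ᵥ x) + 1 / 5 * (x ⬝ᵥ x))
    (hlo : ∀ x, (Qᵀ *ᵥ x) ⬝ᵥ (Qᵀ *ᵥ x) - 1 / 5 * (x ⬝ᵥ x) ≤ x ⬝ᵥ W *ᵥ x)
    {V : Matrix (Fin n) (Fin k) ℝ} (hV : Vᵀ * V = 1) :
    (W * (U * Uᵀ)).trace - (W * (V * Vᵀ)).trace ≤ 7 / 5 * fsq ((1 - U * Uᵀ) * V) := by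
  have hcross := cross_matrix hU hW hopt
  have hNs := compl_symm U
  have hfL : fsq ((1 - V * Vᵀ) * U) = fsq ((1 - U * Uᵀ) * V) := by
    rw [fsq_compl hU hV, fsq_compl hV hU, trace_mul_comm]
  have hX : U * Uᵀ + (1 - U * Uᵀ) = 1 := by abel
  have hLL : ((1 - V * Vᵀ) * U)ᵀ * ((1 - V * Vᵀ) * U) = 1 - Uᵀ * (V * Vᵀ) * U := by
    rw [transpose_mul, (compl_symm V).eq, Matrix.mul_assoc, ← Matrix.mul_assoc (1 - V * Vᵀ),
      compl_idem hV, Matrix.sub_mul, Matrix.mul_sub, Matrix.one_mul, hU]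
    simp only [Matrix.mul_assoc]
  set N := 1 - U * Uᵀ with hN
  set L := (1 - V * Vᵀ) * U with hL
  -- block-diagonal form of `W` with respect to `range U` and its complement
  have hWdec : W = U * (Uᵀ * W * U) * Uᵀ + N * W * N := by
    have h1 : N * W * U = 0 := by
      have := congrArg transpose hcross
      simpa [transpose_mul, hW.eq, hNs.eq, Matrix.mul_assoc] using this
    calc W = (U * Uᵀ + N) * W * (U * Uᵀ + N) := by rw [hX, Matrix.one_mul, Matrix.mul_one]
      _ = U * (Uᵀ * W * U) * Uᵀ + U * (Uᵀ * W * N) + N * W * U * Uᵀ + N * W * N := by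
          simp only [Matrix.add_mul, Matrix.mul_add, Matrix.mul_assoc]; abel
      _ = _ := by rw [hcross, h1]; simp
  set K := Uᵀ * W * U with hK
  have e1 : (W * (U * Uᵀ)).trace = K.trace := by
    rw [← Matrix.mul_assoc, trace_mul_comm, hK, Matrix.mul_assoc]
  have e2 : (W * (V * Vᵀ)).trace
      = (K * (Uᵀ * (V * Vᵀ) * U)).trace + ((N * V)ᵀ * W * (N * V)).trace := by
    conv_lhs => rw [hWdec]
    rw [Matrix.add_mul, trace_add]
    congr 1
    · rw [Matrix.mul_assoc, Matrix.mul_assoc, trace_mul_comm]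
      simp only [Matrix.mul_assoc]
    · rw [transpose_mul, hNs.eq, ← Matrix.mul_assoc, trace_mul_comm]
      simp only [Matrix.mul_assoc]
  have e3 : K.trace - (K * (Uᵀ * (V * Vᵀ) * U)).trace = (Lᵀᵀ * K * Lᵀ).trace := by
    rw [transpose_transpose, Matrix.mul_assoc L, trace_mul_comm L, Matrix.mul_assoc K, hLL,
      Matrix.mul_sub, Matrix.mul_one, trace_sub]
  have hKq : ∀ y, y ⬝ᵥ K *ᵥ y = (U *ᵥ y) ⬝ᵥ W *ᵥ (U *ᵥ y) := by
    intro y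
    rw [hK, ← mulVec_mulVec, ← mulVec_mulVec, dot_mulVec, transpose_transpose]
  have b1 : (Lᵀᵀ * K * Lᵀ).trace ≤ 6 / 5 * fsq (N * V) := by
    rw [← hfL, ← fsq_transpose, trace_conj, fsq_cols, Finset.mul_sum]
    refine Finset.sum_le_sum fun j _ => ?_
    rw [hKq]
    have h1 := hup (U *ᵥ Lᵀᵀ j)
    have h2 := frame_transpose_le hQ (U *ᵥ Lᵀᵀ j)
    rw [frame_dot hU] at h1 h2
    linarith
  have b2 : -(1 / 5 * fsq (N * V)) ≤ ((N * V)ᵀ * W * (N * V)).trace := by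
    rw [trace_conj, fsq_cols, Finset.mul_sum, ← Finset.sum_neg_distrib]
    refine Finset.sum_le_sum fun j _ => ?_
    have h1 := hlo ((N * V)ᵀ j)
    have h2 := dot_self_nonneg (Qᵀ *ᵥ (N * V)ᵀ j)
    linarith
  rw [e1, e2]
  linarith

end OrthIter


/-! ### Smooth convex functions on the Fantope -/

lemma fsq_sub {m : ℕ} {A B : Matrix (Fin m) (Fin m) ℝ} (hA : A.IsSymm) (hB : B.IsSymm) :
    fsq (A - B) = fsq A - 2 * (A * B).trace + fsq B := by
  rw [fsq_symm hA, fsq_symm hB, fsq_symm (hA.sub hB), Matrix.mul_sub, Matrix.sub_mul,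
    Matrix.sub_mul, trace_sub, trace_sub, trace_sub, trace_mul_comm B A]
  ring

lemma fsq_smul {m : ℕ} (t : ℝ) (A : Matrix (Fin m) (Fin m) ℝ) : fsq (t • A) = t ^ 2 * fsq A := by
  simp only [fsq, transpose_smul, Matrix.smul_mul, Matrix.mul_smul, trace_smul, smul_eq_mul]
  ring

lemma fsq_neg_sub {m : ℕ} (A B : Matrix (Fin m) (Fin m) ℝ) : fsq (A - B) = fsq (B - A) := by
  have : A - B = (-1 : ℝ) • (B - A) := by simp
  rw [this, fsq_smul]; ring

section Smooth

variable {n k : ℕ} {f : Matrix (Fin n) (Fin n) ℝ → ℝ}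
  {grad : Matrix (Fin n) (Fin n) ℝ → Matrix (Fin n) (Fin n) ℝ} {β : ℝ}

/-- Descent inequality. The constant `β` in place of `β / 2` suffices here, and it follows from a
single use of the gradient inequality at `Z`. -/
lemma descent (hβ : 0 < β)
    (hgradSymm : ∀ X : Matrix (Fin n) (Fin n) ℝ, (grad X).IsSymm)
    (hconv : ∀ X Y : Matrix (Fin n) (Fin n) ℝ, X.IsSymm → Y.IsSymm →
      f X + (grad X * (Y - X)).trace ≤ f Y)
    (hsmooth : ∀ X Y : Matrix (Fin n) (Fin n) ℝ, X.IsSymm → Y.IsSymm →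
      frobNorm (grad X - grad Y) ≤ β * frobNorm (X - Y))
    {X Z : Matrix (Fin n) (Fin n) ℝ} (hX : X.IsSymm) (hZ : Z.IsSymm) :
    f Z ≤ f X + (grad X * (Z - X)).trace + β * fsq (Z - X) := by
  have h1 := hconv Z X hZ hX
  have h2 := trace_le_of_frob_le ((hgradSymm Z).sub (hgradSymm X)) (hZ.sub hX) hβ
    (hsmooth Z X hZ hX)
  rw [Matrix.sub_mul, trace_sub] at h2
  have h3 : (grad Z * (X - Z)).trace = -(grad Z * (Z - X)).trace := by
    rw [← trace_neg, ← Matrix.mul_neg, neg_sub]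
  linarith

/-- First-order optimality over the Fantope. -/
lemma first_order (hβ : 0 < β)
    (hgradSymm : ∀ X : Matrix (Fin n) (Fin n) ℝ, (grad X).IsSymm)
    (hconv : ∀ X Y : Matrix (Fin n) (Fin n) ℝ, X.IsSymm → Y.IsSymm →
      f X + (grad X * (Y - X)).trace ≤ f Y)
    (hsmooth : ∀ X Y : Matrix (Fin n) (Fin n) ℝ, X.IsSymm → Y.IsSymm →
      frobNorm (grad X - grad Y) ≤ β * frobNorm (X - Y))
    {X Z : Matrix (Fin n) (Fin n) ℝ} (hX : X ∈ Fantope n k) (hZ : Z ∈ Fantope n k)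
    (hopt : ∀ X' ∈ Fantope n k, f X ≤ f X') : 0 ≤ (grad X * (Z - X)).trace := by
  set τ := (grad X * (Z - X)).trace with hτ
  have hF := mul_nonneg hβ.le (fsq_nonneg (Z - X))
  have key : ∀ t : ℝ, 0 ≤ t → t ≤ 1 → 0 ≤ t * τ + t ^ 2 * (β * fsq (Z - X)) := by
    intro t h0 h1
    have hm := fantope_convex hX hZ h0 h1
    have h2 := hopt _ hm
    have h3 := descent hβ hgradSymm hconv hsmooth hX.1 hm.1
    rw [add_sub_cancel_left, fsq_smul, Matrix.mul_smul, trace_smul, smul_eq_mul] at h3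
    linarith
  set F := β * fsq (Z - X)
  by_contra! hneg
  have hden : 0 < F + -τ + 1 := by linarith
  -- `t = -τ / (F - τ + 1) ∈ (0, 1)` satisfies `τ + t F < 0`
  set t := -τ / (F + -τ + 1) with ht
  have ht0 : 0 < t := div_pos (by linarith) hden
  have ht1 : t ≤ 1 := by rw [ht, div_le_one hden]; linarith
  have h := key t ht0.le ht1
  have h5 : t * (F + -τ + 1) = -τ := div_mul_cancel₀ _ hden.ne'
  have h6 : 0 ≤ t * (τ + t * F) := by linarith
  have h7 := nonneg_of_mul_nonneg_right h6 ht0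
  nlinarith

/-- The minimizer is the projection onto the low eigenspace of its gradient, which gives quadratic
growth of `f` on the Fantope. -/
lemma quadratic_growth (hk : 0 < k) (hkn : k < n) (hβ : 0 < β)
    (hgradSymm : ∀ X : Matrix (Fin n) (Fin n) ℝ, (grad X).IsSymm)
    (hconv : ∀ X Y : Matrix (Fin n) (Fin n) ℝ, X.IsSymm → Y.IsSymm →
      f X + (grad X * (Y - X)).trace ≤ f Y)
    (hsmooth : ∀ X Y : Matrix (Fin n) (Fin n) ℝ, X.IsSymm → Y.IsSymm →
      frobNorm (grad X - grad Y) ≤ β * frobNorm (X - Y))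
    {X Z : Matrix (Fin n) (Fin n) ℝ} (hX : X ∈ Fantope n k) (hZ : Z ∈ Fantope n k)
    (hopt : ∀ X' ∈ Fantope n k, f X ≤ f X') {δ : ℝ} (hδ : 0 < δ)
    (hgap : δ ≤ eigval (grad X) (n - k) - eigval (grad X) (n - k + 1)) :
    δ / 2 * fsq (Z - X) ≤ f Z - f X := by
  obtain ⟨P, hP, hgr⟩ := exists_growth hk hkn (hgradSymm X) hδ hgap
  have hPX : X = P := by
    have h1 := first_order hβ hgradSymm hconv hsmooth hX hP hopt
    have h2 := hgr X hX
    have h3 : (grad X * (P - X)).trace = -(grad X * (X - P)).trace := by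
      rw [← trace_neg, ← Matrix.mul_neg, neg_sub]
    have h4 : fsq (X - P) = 0 := by
      have := fsq_nonneg (X - P)
      nlinarith
    rw [fsq_eq_sum] at h4
    ext i j
    have h5 := (Finset.sum_eq_zero_iff_of_nonneg fun i _ => Finset.sum_nonneg
      fun j _ => sq_nonneg ((X - P) i j)).1 h4 i (Finset.mem_univ _)
    have h6 := (Finset.sum_eq_zero_iff_of_nonneg
      fun j _ => sq_nonneg ((X - P) i j)).1 h5 j (Finset.mem_univ _)
    simpa [sub_eq_zero] using h6
  have h := hgr Z hZ
  rw [← hPX] at h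
  linarith [hconv X Z hX.1 hZ.1]

end Smooth

end GOI

/-! ### Linear convergence of the gradient orthogonal iteration -/

open GOI

theorem stmt11 {n k : ℕ} (hk : 0 < k) (hkn : k < n)
    (f : Matrix (Fin n) (Fin n) ℝ → ℝ)
    (grad : Matrix (Fin n) (Fin n) ℝ → Matrix (Fin n) (Fin n) ℝ)
    (β : ℝ) (hβ : 0 < β)
    (hgradSymm : ∀ X : Matrix (Fin n) (Fin n) ℝ, (grad X).IsSymm)
    (hconv : ∀ X Y : Matrix (Fin n) (Fin n) ℝ, X.IsSymm → Y.IsSymm →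
      f X + (grad X * (Y - X)).trace ≤ f Y)
    (hsmooth : ∀ X Y : Matrix (Fin n) (Fin n) ℝ, X.IsSymm → Y.IsSymm →
      frobNorm (grad X - grad Y) ≤ β * frobNorm (X - Y))
    (Xstar : Matrix (Fin n) (Fin n) ℝ)
    (hXstarMem : Xstar ∈ Fantope n k)
    (hXstarOpt : ∀ X ∈ Fantope n k, f Xstar ≤ f X)
    (δ : ℝ) (hδ : 0 < δ)
    (hgap : δ ≤ eigval (grad Xstar) (n - k) - eigval (grad Xstar) (n - k + 1))
    (G : ℝ) (hG : ∀ X ∈ Fantope n k, specNorm (grad X) ≤ G)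
    (η : ℝ) (hη0 : 0 < η) (hη : η ≤ 1 / (5 * max β G))
    (Q : Matrix (Fin n) (Fin k) ℝ) (hQ : Qᵀ * Q = 1)
    (Y W : Matrix (Fin n) (Fin n) ℝ)
    (hY : Y = Q * Qᵀ) (hW : W = Y - η • grad Y)
    (Qp : Matrix (Fin n) (Fin k) ℝ) (hQp : Qpᵀ * Qp = 1)
    (R : Matrix (Fin k) (Fin k) ℝ) (hR : R.BlockTriangular (id : Fin k → Fin k))
    (hQR : Qp * R = W * Q)
    (Yp : Matrix (Fin n) (Fin n) ℝ) (hYp : Yp = Qp * Qpᵀ)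
    (Xp : Matrix (Fin n) (Fin n) ℝ)
    (hXpMem : Xp ∈ Fantope n k)
    (hXpProj : ∀ Z ∈ Fantope n k, frobNorm (Xp - W) ≤ frobNorm (Z - W))
    (hXpP : Xp ∈ ProjSet n k)
    (hclose : frobNorm (Xp - Y) ≤ 1)
    (C0 C1 : ℝ)
    (hC0 : C0 = 2 * (η * G / (1 - η * G)) ^ 2)
    (hC1 : C1 = 2 * (1 + η * G) * C0 / (1 - 2 * η * β - 2 * C0 * (1 + η * G))) :
    f Yp - f Xstar ≤ (1 - η * δ / (4 * (1 + C1))) * (f Y - f Xstar) := by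
  subst hYp
  obtain ⟨U, hU, rfl⟩ := hXpP
  have hYmem : Y ∈ Fantope n k := hY ▸ proj_mem hQ
  have hYpmem : Qp * Qpᵀ ∈ Fantope n k := proj_mem hQp
  -- `M = max β G` bounds both the smoothness constant and the gradient, with `ηM ≤ 1/5`
  set M := max β G with hM
  have hM0 : 0 < M := lt_of_lt_of_le hβ (le_max_left _ _)
  have hηM : η * M ≤ 1 / 5 := by
    have := mul_le_mul_of_nonneg_right hη hM0.le
    have e : 1 / (5 * M) * M = 1 / 5 := by field_simp
    linarith
  have hηβ : η * β ≤ 1 / 5 := (mul_le_mul_of_nonneg_left (le_max_left β G) hη0.le).trans hηM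
  have hηG : η * G ≤ 1 / 5 := (mul_le_mul_of_nonneg_left (le_max_right β G) hη0.le).trans hηM
  have hG0 : 0 ≤ G := (Real.sqrt_nonneg _).trans (hG Y hYmem)
  have hηG0 : 0 ≤ η * G := mul_nonneg hη0.le hG0
  have hηβ0 : 0 < η * β := mul_pos hη0 hβ
  have hquad := fun X hX => quad_le_of_specNorm hM0 ((hG X hX).trans (le_max_right β G))
  have hδM : δ ≤ 2 * M := gap_le hk hkn (hgradSymm Xstar) hgap
    (fun x => (hquad Xstar hXstarMem x).1) (fun x => (hquad Xstar hXstarMem x).2)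
  -- `C₀ ≤ 1/8`, hence `C₁ ≥ 0`
  have hC00 : 0 ≤ C0 := by rw [hC0]; positivity
  have hC01 : C0 ≤ 1 / 8 := by
    have h1 : η * G / (1 - η * G) ≤ 1 / 4 := by
      rw [div_le_iff₀ (by linarith)]; linarith
    have h2 : 0 ≤ η * G / (1 - η * G) := div_nonneg hηG0 (by linarith)
    rw [hC0]; nlinarith
  have hC10 : 0 ≤ C1 := by
    rw [hC1]
    refine div_nonneg (by positivity) ?_
    nlinarith
  have hWs : W.IsSymm := by rw [hW]; exact hYmem.1.sub ((hgradSymm Y).smul η)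
  have hWquad : ∀ x, x ⬝ᵥ W *ᵥ x = (Qᵀ *ᵥ x) ⬝ᵥ (Qᵀ *ᵥ x) - η * (x ⬝ᵥ grad Y *ᵥ x) := by
    intro x
    rw [hW, sub_mulVec, dotProduct_sub, smul_mulVec, dotProduct_smul, smul_eq_mul, hY,
      ← mulVec_mulVec, dot_mulVec Q]
  have hpert : ∀ x, η * (x ⬝ᵥ grad Y *ᵥ x) ≤ 1 / 5 * (x ⬝ᵥ x) ∧
      -(1 / 5 * (x ⬝ᵥ x)) ≤ η * (x ⬝ᵥ grad Y *ᵥ x) := by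
    intro x
    have h1 := mul_le_mul_of_nonneg_left (hquad Y hYmem x).1 hη0.le
    have h2 := mul_le_mul_of_nonneg_left (hquad Y hYmem x).2 hη0.le
    have h3 := mul_le_mul_of_nonneg_right hηM (dot_self_nonneg x)
    constructor <;> linarith
  have hup : ∀ x, x ⬝ᵥ W *ᵥ x ≤ (Qᵀ *ᵥ x) ⬝ᵥ (Qᵀ *ᵥ x) + 1 / 5 * (x ⬝ᵥ x) := fun x => by
    rw [hWquad]; linarith [(hpert x).2]
  have hlo : ∀ x, (Qᵀ *ᵥ x) ⬝ᵥ (Qᵀ *ᵥ x) - 1 / 5 * (x ⬝ᵥ x) ≤ x ⬝ᵥ W *ᵥ x := fun x => by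
    rw [hWquad]; linarith [(hpert x).1]
  have hproj : ∀ Z ∈ Fantope n k, fsq (U * Uᵀ - W) ≤ fsq (Z - W) := fun Z hZ => by
    rw [← frobNorm_sq, ← frobNorm_sq]
    exact pow_le_pow_left₀ (frobNorm_nonneg _) (hXpProj Z hZ) 2
  have hopt : ∀ V : Matrix (Fin n) (Fin k) ℝ, Vᵀ * V = 1 →
      (W * (V * Vᵀ)).trace ≤ (W * (U * Uᵀ)).trace := by
    intro V hV
    have h := hproj _ (proj_mem hV)
    rw [fsq_sub (proj_symm U) hWs, fsq_sub (proj_symm V) hWs, proj_fsq hU, proj_fsq hV,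
      trace_mul_comm _ W, trace_mul_comm _ W] at h
    linarith
  -- distances between the three projections
  have hd : fsq (U * Uᵀ - Y) = 2 * fsq ((1 - U * Uᵀ) * Q) := by rw [hY, fsq_proj_sub hU hQ]
  have he : fsq (U * Uᵀ - Qp * Qpᵀ) = 2 * fsq ((1 - U * Uᵀ) * Qp) := fsq_proj_sub hU hQp
  have hd1 : fsq (U * Uᵀ - Y) ≤ 1 := by
    rw [← frobNorm_sq]
    exact pow_le_one₀ (frobNorm_nonneg _) hclose
  have hed := contraction hU hQ hWs hopt hup hlo (by linarith) hQp hQR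
  have hloss := trace_loss hU hQ hWs hopt hup hlo hQp
  have hp : fsq (U * Uᵀ - Y) / 2 - fsq (U * Uᵀ - Qp * Qpᵀ) ≤ fsq (Qp * Qpᵀ - Y) := by
    have hA := (proj_symm U).sub hYmem.1
    have hB := (proj_symm U).sub (proj_symm Qp)
    have e : Qp * Qpᵀ - Y = (U * Uᵀ - Y) - (U * Uᵀ - Qp * Qpᵀ) := by abel
    have h1 := fsq_nonneg ((U * Uᵀ - Y) - (2 : ℝ) • (U * Uᵀ - Qp * Qpᵀ))
    rw [fsq_sub hA (hB.smul 2), fsq_smul, Matrix.mul_smul, trace_smul, smul_eq_mul] at h1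
    rw [e, fsq_sub hA hB]
    linarith
  -- the proximal objective `‖Z - Y‖² + 2η⟨∇f(Y), Z - Y⟩`
  have hprox : ∀ Z : Matrix (Fin n) (Fin n) ℝ, Z.IsSymm →
      fsq (Z - W) = fsq (Z - Y) + 2 * η * (grad Y * (Z - Y)).trace + η ^ 2 * fsq (grad Y) := by
    intro Z hZ
    have e : Z - W = (Z - Y) - (-η) • grad Y := by rw [hW, neg_smul]; abel
    rw [e, fsq_sub (hZ.sub hYmem.1) ((hgradSymm Y).smul _), fsq_smul, Matrix.mul_smul, trace_smul,
      smul_eq_mul, trace_mul_comm (Z - Y)]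
    ring
  set h := f Y - f Xstar with hh
  have hh0 : 0 ≤ h := sub_nonneg.2 (hXstarOpt Y hYmem)
  have hgrow := quadratic_growth hk hkn hβ hgradSymm hconv hsmooth hXstarMem hYmem hXstarOpt hδ
    hgap
  rw [fsq_neg_sub] at hgrow
  have hηδ : η * δ ≤ 2 / 5 := by
    have := mul_le_mul_of_nonneg_left hδM hη0.le
    linarith
  have hηδ0 : 0 < η * δ := mul_pos hη0 hδ
  -- compare `X⁺` with the point of the segment `[Y, X*]` at parameter `ηδ/2`
  have hXp : fsq (U * Uᵀ - Y) + 2 * η * (grad Y * (U * Uᵀ - Y)).trace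
      ≤ -(η ^ 2 * δ * h / 2) := by
    have hmem := fantope_convex hYmem hXstarMem (t := η * δ / 2) (by linarith) (by linarith)
    have h1 := hproj _ hmem
    rw [hprox _ (proj_symm U), hprox _ hmem.1, add_sub_cancel_left, fsq_smul, Matrix.mul_smul,
      trace_smul, smul_eq_mul] at h1
    have h2 : (grad Y * (Xstar - Y)).trace ≤ -h := by
      linarith [hconv Y Xstar hYmem.1 hXstarMem.1]
    have h3 := mul_le_mul_of_nonneg_left h2 (show 0 ≤ η ^ 2 * δ by positivity)
    have h4 := mul_le_mul_of_nonneg_left hgrow (show 0 ≤ η ^ 2 * δ / 2 by positivity)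
    linarith
  have hYp : fsq (Qp * Qpᵀ - Y) + 2 * η * (grad Y * (Qp * Qpᵀ - Y)).trace
      ≤ -(η ^ 2 * δ * h / 2) + 7 / 5 * fsq (U * Uᵀ - Qp * Qpᵀ) := by
    have h1 := hprox _ (proj_symm U)
    have h2 := hprox _ (proj_symm Qp)
    rw [fsq_sub (proj_symm _) hWs, proj_fsq hU, trace_mul_comm _ W] at h1
    rw [fsq_sub (proj_symm _) hWs, proj_fsq hQp, trace_mul_comm _ W] at h2
    linarith
  have hdesc := descent hβ hgradSymm hconv hsmooth hYmem.1 (proj_symm Qp)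
  have hstep : f (Qp * Qpᵀ) - f Y ≤ -(η * δ / 4 * h) := by
    have h1 := mul_le_mul_of_nonneg_left hdesc hη0.le
    have h2 := mul_le_mul_of_nonneg_right hηβ (fsq_nonneg (Qp * Qpᵀ - Y))
    have h3 := fsq_nonneg (U * Uᵀ - Y)
    refine le_of_mul_le_mul_left ?_ hη0
    linarith
  -- the rate `ηδ/4` is stronger than the claimed one because `C₁ ≥ 0`
  have hrate : η * δ / (4 * (1 + C1)) ≤ η * δ / 4 :=
    div_le_div_of_nonneg_left hηδ0.le (by norm_num) (by linarith)
  have := mul_le_mul_of_nonneg_right hrate hh0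
  linarith
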